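/- Let M₁, …, M_k be matroids on a common finite ground set V, let C be the complex of their common independent sets, and let λ > 0. Then the following are equivalent: (1) the intersection of the polytopes P(M_i) is contained in λ·P(C); (2) for every h : V → ℝ≥0 one has χ*(C, h) ≤ λ · max_i χ*(M_i, h). -/

import Mathlib

/-- Matroid axioms for a family of finsets. -/
def IsMatroid {V : Type*} [DecidableEq V] (M : Set (Finset V)) : Prop :=
  (∅ : Finset V) ∈ M ∧ (∀ S ∈ M, ∀ T, T ⊆ S → T ∈ M) ∧
  ∀ S ∈ M, ∀ T ∈ M, S.card < T.card → ∃ v ∈ T \ S, insert v S ∈ M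

/-- The fractional `h`-chromatic number of a complex `C`. -/
noncomputable def fracChrom {V : Type*} [Fintype V] [DecidableEq V]
    (C : Set (Finset V)) (h : V → ℝ) : ℝ :=
  sInf {t : ℝ | ∃ f : Finset V → ℝ, (∀ S, 0 ≤ f S) ∧ (∀ S, S ∉ C → f S = 0) ∧
    (∀ v : V, h v ≤ ∑ S : Finset V, if v ∈ S then f S else 0) ∧ t = ∑ S : Finset V, f S}

/-- `P(C)`: convex hull of indicator vectors of faces. -/
noncomputable def polytopeP {V : Type*} [Fintype V] [DecidableEq V]
    (C : Set (Finset V)) : Set (V → ℝ) :=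
  convexHull ℝ {x : V → ℝ | ∃ S ∈ C, x = fun v => if v ∈ S then (1 : ℝ) else 0}

/-!
On the nonnegative orthant, `χ*(C, ·)` is the gauge (Minkowski functional) of `P(C)`: a fractional
`h`-coloring of total weight `t` writes a vector above `h` as `t` times a convex combination of
indicator vectors of faces, and `P(C)` is closed under decreasing coordinates to nonnegative values.
For closed convex sets containing `0`, an inequality between gauges is the same as an inclusion
between the sets, provided it is only tested on vectors that a multiple of each set reaches. Here
the cone spanned by `P(C)` consists of the nonnegative vectors supported on the vertices of `C`, so
the cone of the common independent sets is the intersection of the cones of the `P(M_i)`.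
-/

open scoped Pointwise

section Gauge

variable {E : Type*} [AddCommGroup E] [Module ℝ E] {s : Set E} {x : E} {a : ℝ}

theorem gauge_eq_sInf_nonneg (s : Set E) (x : E) :
    gauge s x = sInf {r : ℝ | 0 ≤ r ∧ x ∈ r • s} := by
  rcases eq_or_ne x 0 with rfl | hx
  · rcases s.eq_empty_or_nonempty with rfl | hs
    · simp
    · have hleast : IsLeast {r : ℝ | 0 ≤ r ∧ (0 : E) ∈ r • s} 0 :=
        ⟨⟨le_rfl, by simp [Set.zero_smul_set hs]⟩, fun r hr => hr.1⟩
      rw [gauge_zero, hleast.csInf_eq]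
  · have hne {r : ℝ} (hr : x ∈ r • s) : r ≠ 0 := by
      rintro rfl
      exact hx (Set.zero_smul_set_subset s hr)
    rw [gauge_def]
    congr 1
    ext r
    exact and_congr_left fun hr => ⟨fun h0 => le_of_lt h0, fun h0 => h0.lt_of_ne' (hne hr)⟩

theorem gauge_eq_zero_of_forall_notMem (hx : ∀ r > (0 : ℝ), x ∉ r • s) : gauge s x = 0 := by
  have hempty : {r ∈ Set.Ioi (0 : ℝ) | x ∈ r • s} = ∅ :=
    Set.eq_empty_of_forall_notMem fun r hr => hx r hr.1 hr.2
  rw [gauge_def, hempty, Real.sInf_empty]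

theorem mem_smul_of_gauge_lt (hs : StarConvex ℝ 0 s) (hx : ∃ r > (0 : ℝ), x ∈ r • s)
    (hxa : gauge s x < a) : x ∈ a • s := by
  rw [gauge_def] at hxa
  obtain ⟨b, ⟨hb, y, hy, rfl⟩, hba⟩ := exists_lt_of_csInf_lt hx hxa
  have hb0 : 0 < b := hb
  have ha0 : 0 < a := hb0.trans hba
  refine ⟨(b / a) • y, hs.smul_mem hy (by positivity) (div_le_one_of_le₀ hba.le ha0.le), ?_⟩
  simp only [smul_smul, mul_div_cancel₀ b ha0.ne']

theorem mem_smul_of_gauge_le [TopologicalSpace E] [ContinuousSMul ℝ E] (hs : StarConvex ℝ 0 s)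
    (hclosed : IsClosed s) (hx : ∃ r > (0 : ℝ), x ∈ r • s) (ha : 0 < a) (hxa : gauge s x ≤ a) :
    x ∈ a • s := by
  rw [Set.mem_smul_set_iff_inv_smul_mem₀ ha.ne']
  have hlim : Filter.Tendsto (fun r : ℝ => r⁻¹ • x) (nhdsWithin a (Set.Ioi a)) (nhds (a⁻¹ • x)) :=
    ((tendsto_inv₀ ha.ne').smul_const x).mono_left nhdsWithin_le_nhds
  refine hclosed.mem_of_tendsto hlim ?_
  filter_upwards [self_mem_nhdsWithin] with r (hr : a < r)
  rw [← Set.mem_smul_set_iff_inv_smul_mem₀ (ha.trans hr).ne']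
  exact mem_smul_of_gauge_lt hs hx (hxa.trans_lt hr)

theorem iInter_subset_smul_iff_gauge_le [TopologicalSpace E] [ContinuousSMul ℝ E]
    {ι : Type*} [Nonempty ι] {t : ι → Set E} (ht : ∀ i, StarConvex ℝ 0 (t i))
    (hs : StarConvex ℝ 0 s) (hclosed : IsClosed s)
    (hcone : ∀ x, (∃ r > (0 : ℝ), x ∈ r • s) ↔ ∀ i, ∃ r > (0 : ℝ), x ∈ r • t i)
    (hbdd : ∀ x, BddAbove (Set.range fun i => gauge (t i) x)) (ha : 0 < a) :
    ⋂ i, t i ⊆ a • s ↔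
      ∀ x, (∃ r > (0 : ℝ), x ∈ r • s) → gauge s x ≤ a * ⨆ i, gauge (t i) x := by
  constructor
  · intro hsub x hx
    rw [← div_le_iff₀' ha]
    refine le_of_forall_gt_imp_ge_of_dense fun r hr => ?_
    have hgauge : ∀ i, gauge (t i) x < r := fun i =>
      (le_ciSup (hbdd x) i).trans_lt hr
    have hr0 : 0 < r := (gauge_nonneg x).trans_lt (hgauge (Classical.arbitrary ι))
    have hmem : r⁻¹ • x ∈ ⋂ i, t i := Set.mem_iInter.2 fun i =>
      (Set.mem_smul_set_iff_inv_smul_mem₀ hr0.ne' _ _).1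
        (mem_smul_of_gauge_lt (ht i) ((hcone x).1 hx i) (hgauge i))
    rw [div_le_iff₀' ha, mul_comm]
    refine gauge_le_of_mem (by positivity) ?_
    rw [mul_smul, Set.mem_smul_set_iff_inv_smul_mem₀ hr0.ne']
    exact hsub hmem
  · intro hgauge x hx
    rw [Set.mem_iInter] at hx
    have hxs : ∃ r > (0 : ℝ), x ∈ r • s :=
      (hcone x).2 fun i => ⟨1, one_pos, by simpa only [one_smul] using hx i⟩
    have hsup : ⨆ i, gauge (t i) x ≤ 1 := ciSup_le fun i => gauge_le_one_of_mem (hx i)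
    exact mem_smul_of_gauge_le hs hclosed hxs ha
      ((hgauge x hxs).trans (mul_le_of_le_one_right ha.le hsup))

end Gauge

theorem sum_smul_mem_sum_smul {𝕜 E ι : Type*} [Field 𝕜] [LinearOrder 𝕜] [IsStrictOrderedRing 𝕜]
    [AddCommGroup E] [Module 𝕜 E] {s : Set E} (hs : Convex 𝕜 s) (hne : s.Nonempty)
    {t : Finset ι} {w : ι → 𝕜} {z : ι → E} (hw : ∀ i ∈ t, 0 ≤ w i)
    (hz : ∀ i ∈ t, w i ≠ 0 → z i ∈ s) : ∑ i ∈ t, w i • z i ∈ (∑ i ∈ t, w i) • s := by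
  classical
  rcases (Finset.sum_nonneg hw).eq_or_lt' with hzero | hpos
  · have hw0 := (Finset.sum_eq_zero_iff_of_nonneg hw).1 hzero
    rw [hzero, Set.zero_smul_set hne, Finset.sum_eq_zero fun i hi => by rw [hw0 i hi, zero_smul]]
    exact Set.zero_mem_zero
  · rw [Set.mem_smul_set_iff_inv_smul_mem₀ hpos.ne']
    change t.centerMass w z ∈ s
    rw [← Finset.centerMass_filter_ne_zero]
    refine hs.centerMass_mem (fun i hi => hw i (Finset.mem_filter.1 hi).1) ?_ fun i hi =>
      hz i (Finset.mem_filter.1 hi).1 (Finset.mem_filter.1 hi).2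
    rwa [Finset.sum_filter_ne_zero]

theorem convexHull_pi_zero_one (ι : Type*) [Finite ι] :
    convexHull ℝ (Set.univ.pi fun _ : ι => ({0, 1} : Set ℝ)) = Set.Icc 0 1 := by
  simp only [convexHull_pi, convexHull_pair, segment_eq_Icc zero_le_one, Set.pi_univ_Icc]
  rfl

section Polytope

variable {V : Type*} [DecidableEq V]

/-- The indicator vector in `ℝ^V` of a set of vertices. -/
def indicatorVector (S : Finset V) : V → ℝ := fun v => if v ∈ S then 1 else 0

variable [Fintype V] {C : Set (Finset V)} {h x y : V → ℝ} {t : ℝ}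

theorem convex_polytopeP : Convex ℝ (polytopeP C) := convex_convexHull ℝ _

theorem indicatorVector_mem_polytopeP {S : Finset V} (hS : S ∈ C) :
    indicatorVector S ∈ polytopeP C :=
  subset_convexHull _ _ ⟨S, hS, rfl⟩

theorem polytopeP_subset_of_convex {K : Set (V → ℝ)} (hK : Convex ℝ K)
    (hvertex : ∀ S ∈ C, indicatorVector S ∈ K) : polytopeP C ⊆ K :=
  convexHull_min (by rintro _ ⟨S, hS, rfl⟩; exact hvertex S hS) hK

theorem zero_mem_polytopeP (hempty : ∅ ∈ C) : (0 : V → ℝ) ∈ polytopeP C := by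
  convert indicatorVector_mem_polytopeP hempty
  ext v
  simp [indicatorVector]

theorem starConvex_polytopeP (hempty : ∅ ∈ C) : StarConvex ℝ 0 (polytopeP C) :=
  convex_polytopeP.starConvex (zero_mem_polytopeP hempty)

theorem isClosed_polytopeP : IsClosed (polytopeP C) := by
  refine Set.Finite.isClosed_convexHull (𝕜 := ℝ) ((Set.finite_range indicatorVector).subset ?_)
  rintro _ ⟨S, -, rfl⟩
  exact ⟨S, rfl⟩

theorem nonneg_of_mem_polytopeP (hx : x ∈ polytopeP C) : 0 ≤ x := by
  refine polytopeP_subset_of_convex (convex_Ici 0) (fun S _ v => ?_) hx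
  simp only [indicatorVector, Pi.zero_apply]
  positivity

theorem singleton_mem_of_mem_polytopeP (hC : IsLowerSet C) (hx : x ∈ polytopeP C) {v : V}
    (hv : 0 < x v) : {v} ∈ C := by
  by_contra hvC
  have hface : ∀ S ∈ C, indicatorVector S ∈ {z : V → ℝ | z v ≤ 0} := fun S hS => by
    have hvS : v ∉ S := fun hvS => hvC (hC (Finset.singleton_subset_iff.2 hvS) hS)
    simp [indicatorVector, hvS]
  have hconvex : Convex ℝ {z : V → ℝ | z v ≤ 0} :=
    convex_halfSpace_le (LinearMap.proj (R := ℝ) v).isLinear 0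
  exact hv.not_ge (polytopeP_subset_of_convex hconvex hface hx)

theorem exists_mem_smul_polytopeP_iff (hC : IsLowerSet C) (hempty : ∅ ∈ C) :
    (∃ r > (0 : ℝ), h ∈ r • polytopeP C) ↔ 0 ≤ h ∧ ∀ v, 0 < h v → {v} ∈ C := by
  constructor
  · rintro ⟨r, hr, y, hy, rfl⟩
    exact ⟨smul_nonneg hr.le (nonneg_of_mem_polytopeP hy), fun v hv =>
      singleton_mem_of_mem_polytopeP hC hy (pos_of_mul_pos_right hv hr.le)⟩
  · rintro ⟨hh, hsupport⟩
    have hzero := zero_mem_polytopeP hempty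
    have hdecomp : ∑ v, h v • indicatorVector {v} = h := by
      ext w
      simp [indicatorVector, Finset.sum_apply]
    have hsum : ∑ v, h v • indicatorVector {v} ∈ (∑ v, h v) • polytopeP C :=
      sum_smul_mem_sum_smul convex_polytopeP ⟨0, hzero⟩ (fun v _ => hh v)
        fun v _ hv => indicatorVector_mem_polytopeP (hsupport v ((hh v).lt_of_ne' hv))
    have hnonneg : 0 ≤ ∑ v, h v := Finset.sum_nonneg fun v _ => hh v
    refine ⟨∑ v, h v + 1, by positivity, ?_⟩
    rw [convex_polytopeP.add_smul hnonneg zero_le_one, one_smul]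
    simpa only [hdecomp, add_zero] using Set.add_mem_add hsum hzero

theorem mul_mem_polytopeP (hC : IsLowerSet C) (hx : x ∈ Set.Icc 0 1) (hy : y ∈ polytopeP C) :
    x * y ∈ polytopeP C := by
  -- By bilinearity it is enough to take `x` a 0/1 vector and `y` the indicator vector of a face,
  -- and then `x * y` is the indicator vector of a smaller face.
  refine polytopeP_subset_of_convex (K := LinearMap.mulLeft ℝ x ⁻¹' polytopeP C)
    (convex_polytopeP.linear_preimage _) (fun S hS => ?_) hy
  rw [← convexHull_pi_zero_one] at hx
  refine convexHull_min (t := LinearMap.mulRight ℝ (indicatorVector S) ⁻¹' polytopeP C)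
    (fun b hb => ?_) (convex_polytopeP.linear_preimage _) hx
  have hface : S.filter (fun v => b v = 1) ∈ C := hC (Finset.filter_subset _ S) hS
  have hprod : b * indicatorVector S = indicatorVector (S.filter fun v => b v = 1) := by
    ext v
    rcases hb v (Set.mem_univ v) with hbv | hbv
    · simp [indicatorVector, hbv]
    · simp [indicatorVector, Set.mem_singleton_iff.1 hbv]
  rw [Set.mem_preimage, LinearMap.mulRight_apply, hprod]
  exact indicatorVector_mem_polytopeP hface

theorem mem_smul_polytopeP_of_le (hC : IsLowerSet C) (hx : 0 ≤ x) (hxy : x ≤ y)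
    (hy : y ∈ t • polytopeP C) : x ∈ t • polytopeP C := by
  have hratio : x / y ∈ Set.Icc 0 1 :=
    ⟨fun v => div_nonneg (hx v) ((hx v).trans (hxy v)),
      fun v => div_le_one_of_le₀ (hxy v) ((hx v).trans (hxy v))⟩
  have hmul : x / y * y = x := funext fun v =>
    div_mul_cancel_of_imp fun hyv => le_antisymm (hyv ▸ hxy v) (hx v)
  obtain ⟨z, hz, rfl⟩ := hy
  exact ⟨_, mul_mem_polytopeP hC hratio hz, by simpa only [mul_smul_comm] using hmul⟩

/-- `f` is a fractional `h`-coloring of `C`, extended by zero to all sets of vertices; the covering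
condition is stated as an inequality between vectors. -/
structure IsFracColoring (C : Set (Finset V)) (h : V → ℝ) (f : Finset V → ℝ) : Prop where
  nonneg : 0 ≤ f
  eq_zero_of_notMem : ∀ S ∉ C, f S = 0
  le_sum : h ≤ ∑ S, f S • indicatorVector S

theorem fracChrom_eq_sInf_isFracColoring (C : Set (Finset V)) (h : V → ℝ) :
    fracChrom C h = sInf {t | ∃ f, IsFracColoring C h f ∧ ∑ S, f S = t} := by
  have hcover (f : Finset V → ℝ) (v : V) :
      (∑ S, f S • indicatorVector S) v = ∑ S, if v ∈ S then f S else 0 := by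
    simp [indicatorVector, Finset.sum_apply]
  unfold fracChrom
  congr! 3 with t
  refine exists_congr fun f => ⟨?_, ?_⟩
  · rintro ⟨hf, hfC, hle, rfl⟩
    exact ⟨⟨hf, hfC, fun v => (hle v).trans_eq (hcover f v).symm⟩, rfl⟩
  · rintro ⟨hf, rfl⟩
    exact ⟨hf.nonneg, hf.eq_zero_of_notMem, fun v => (hf.le_sum v).trans_eq (hcover f v), rfl⟩

namespace IsFracColoring

variable {f g : Finset V → ℝ}

theorem add (hf : IsFracColoring C x f) (hg : IsFracColoring C y g) :
    IsFracColoring C (x + y) (f + g) where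
  nonneg := add_nonneg hf.nonneg hg.nonneg
  eq_zero_of_notMem S hS := by
    simp only [Pi.add_apply, hf.eq_zero_of_notMem S hS, hg.eq_zero_of_notMem S hS, add_zero]
  le_sum := by
    simpa only [Pi.add_apply, add_smul, Finset.sum_add_distrib] using add_le_add hf.le_sum hg.le_sum

theorem smul (hf : IsFracColoring C x f) (ht : 0 ≤ t) : IsFracColoring C (t • x) (t • f) where
  nonneg := smul_nonneg ht hf.nonneg
  eq_zero_of_notMem S hS := by simp only [Pi.smul_apply, hf.eq_zero_of_notMem S hS, smul_zero]
  le_sum := by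
    simpa only [Pi.smul_apply, smul_assoc, Finset.smul_sum] using
      smul_le_smul_of_nonneg_left hf.le_sum ht

theorem single {S : Finset V} (hS : S ∈ C) :
    IsFracColoring C (indicatorVector S) (Pi.single S 1) where
  nonneg := Pi.single_nonneg.2 zero_le_one
  eq_zero_of_notMem T hT := Pi.single_eq_of_ne (ne_of_mem_of_not_mem hS hT).symm 1
  le_sum := by simp [Pi.single_apply]

theorem mem_sum_smul_polytopeP (hf : IsFracColoring C h f) (hC : IsLowerSet C) (hempty : ∅ ∈ C)
    (hh : 0 ≤ h) : h ∈ (∑ S, f S) • polytopeP C := by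
  refine mem_smul_polytopeP_of_le hC hh hf.le_sum ?_
  refine sum_smul_mem_sum_smul convex_polytopeP ⟨0, zero_mem_polytopeP hempty⟩
    (fun S _ => hf.nonneg S) fun S _ hS => indicatorVector_mem_polytopeP ?_
  exact by_contra fun hSC => hS (hf.eq_zero_of_notMem S hSC)

end IsFracColoring

theorem exists_isFracColoring_sum_eq_one (hx : x ∈ polytopeP C) :
    ∃ f, IsFracColoring C x f ∧ ∑ S, f S = 1 := by
  refine polytopeP_subset_of_convex (K := {x | ∃ f, IsFracColoring C x f ∧ ∑ S, f S = 1}) ?_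
    (fun S hS => ⟨_, .single hS, by simp⟩) hx
  rintro x ⟨f, hf, hf1⟩ y ⟨g, hg, hg1⟩ a b ha hb hab
  refine ⟨a • f + b • g, (hf.smul ha).add (hg.smul hb), ?_⟩
  simp [Finset.sum_add_distrib, ← Finset.mul_sum, hf1, hg1, hab]

theorem exists_isFracColoring_sum_eq_iff (hC : IsLowerSet C) (hempty : ∅ ∈ C) (hh : 0 ≤ h) :
    (∃ f, IsFracColoring C h f ∧ ∑ S, f S = t) ↔ 0 ≤ t ∧ h ∈ t • polytopeP C := by
  constructor
  · rintro ⟨f, hf, rfl⟩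
    exact ⟨Finset.sum_nonneg fun S _ => hf.nonneg S, hf.mem_sum_smul_polytopeP hC hempty hh⟩
  · rintro ⟨ht, x, hx, rfl⟩
    obtain ⟨f, hf, hf1⟩ := exists_isFracColoring_sum_eq_one hx
    exact ⟨t • f, hf.smul ht, by simp [← Finset.mul_sum, hf1]⟩

theorem fracChrom_eq_gauge (hC : IsLowerSet C) (hempty : ∅ ∈ C) (hh : 0 ≤ h) :
    fracChrom C h = gauge (polytopeP C) h := by
  simp only [fracChrom_eq_sInf_isFracColoring, gauge_eq_sInf_nonneg,
    exists_isFracColoring_sum_eq_iff hC hempty hh]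

section Family

variable {ι : Type*} {M : ι → Set (Finset V)}

theorem exists_mem_smul_polytopeP_setOf_forall_mem_iff [Nonempty ι]
    (hM : ∀ i, IsLowerSet (M i)) (hempty : ∀ i, ∅ ∈ M i) :
    (∃ r > (0 : ℝ), h ∈ r • polytopeP {S | ∀ i, S ∈ M i}) ↔
      ∀ i, ∃ r > (0 : ℝ), h ∈ r • polytopeP (M i) := by
  have hC : IsLowerSet {S | ∀ i, S ∈ M i} := fun S T hTS hS i => hM i hTS (hS i)
  simp only [exists_mem_smul_polytopeP_iff hC hempty,
    fun i => exists_mem_smul_polytopeP_iff (h := h) (hM i) (hempty i), forall_and, forall_const,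
    Set.mem_ofPred_eq]
  tauto

theorem bddAbove_range_gauge_polytopeP (M : ι → Set (Finset V)) (h : V → ℝ) :
    BddAbove (Set.range fun i => gauge (polytopeP (M i)) h) :=
  (Set.finite_range fun D : Set (Finset V) => gauge (polytopeP D) h).bddAbove.mono
    (Set.range_comp_subset_range M fun D => gauge (polytopeP D) h)

theorem stmt_8_general [Nonempty ι] (hM : ∀ i, IsLowerSet (M i)) (hempty : ∀ i, ∅ ∈ M i)
    {lam : ℝ} (hlam : 0 < lam) :
    ((⋂ i, polytopeP (M i)) ⊆ (fun y => lam • y) '' polytopeP {S | ∀ i, S ∈ M i}) ↔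
    (∀ h : V → ℝ, (∀ v, 0 ≤ h v) →
      fracChrom {S | ∀ i, S ∈ M i} h ≤ lam * ⨆ i, fracChrom (M i) h) := by
  have hC : IsLowerSet {S | ∀ i, S ∈ M i} := fun S T hTS hS i => hM i hTS (hS i)
  have hemptyC : ∅ ∈ {S | ∀ i, S ∈ M i} := hempty
  refine (iInter_subset_smul_iff_gauge_le (fun i => starConvex_polytopeP (hempty i))
    (starConvex_polytopeP hemptyC) isClosed_polytopeP
    (fun _ => exists_mem_smul_polytopeP_setOf_forall_mem_iff hM hempty)
    (bddAbove_range_gauge_polytopeP M) hlam).trans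
    (forall_congr' fun h => ⟨fun hgauge hh => ?_, fun hchrom hmem => ?_⟩)
  · simp only [fracChrom_eq_gauge hC hemptyC hh, fracChrom_eq_gauge (hM _) (hempty _) hh]
    by_cases hmem : ∃ r > (0 : ℝ), h ∈ r • polytopeP {S | ∀ i, S ∈ M i}
    · exact hgauge hmem
    -- `h` has no fractional coloring here, so its chromatic number is the junk value `sInf ∅ = 0`.
    · rw [gauge_eq_zero_of_forall_notMem fun r hr hr' => hmem ⟨r, hr, hr'⟩]
      exact mul_nonneg hlam.le (Real.iSup_nonneg fun i => gauge_nonneg h)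
  · have hh : 0 ≤ h := ((exists_mem_smul_polytopeP_iff hC hemptyC).1 hmem).1
    simpa only [fracChrom_eq_gauge hC hemptyC hh, fracChrom_eq_gauge (hM _) (hempty _) hh]
      using hchrom hh

end Family

end Polytope

/-- For matroids `M₁, …, M_k` with common independence complex `C` and
`λ > 0`, we have `⋂ᵢ P(Mᵢ) ⊆ λ·P(C)` if and only if for every `h : V → ℝ≥0`,
`χ*(C,h) ≤ λ · maxᵢ χ*(Mᵢ,h)`. -/
theorem stmt_8 {V : Type*} [Fintype V] [DecidableEq V] (k : ℕ) (hk : 0 < k)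
    (M : Fin k → Set (Finset V)) (hM : ∀ i, IsMatroid (M i))
    (lam : ℝ) (hlam : 0 < lam) :
    ((⋂ i, polytopeP (M i)) ⊆ (fun y => lam • y) '' polytopeP {S | ∀ i, S ∈ M i}) ↔
    (∀ h : V → ℝ, (∀ v, 0 ≤ h v) →
      fracChrom {S | ∀ i, S ∈ M i} h ≤ lam * ⨆ i, fracChrom (M i) h) := by
  have : Nonempty (Fin k) := ⟨⟨0, hk⟩⟩
  exact stmt_8_general (fun i S T hTS hS => (hM i).2.1 S hS T hTS) (fun i => (hM i).1) hlam
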